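/- Characterization of plurality: Let X be a finite set with |X| ≥ 3. An SRS R : ℛ(𝔛) → ℛ(X) satisfies NT, WIVIP, TO, and SI if and only if R = R^P. -/

import Mathlib

/-!
Social ranking solutions (SRSs).  The set of individuals is a finite type `X`;
coalitions are elements of `Finset X` (so the domain of a power relation is the
whole power set `𝔛 = 2^X`).  A weak order `≿ ∈ ℛ(𝔛)` is encoded as a relation
`r : Finset X → Finset X → Prop` together with (when needed) its list of
equivalence classes `L = [Σ₁, …, Σ_l]` in strictly decreasing order
(`IsClassList r L`).
-/

namespace SocialRanking

variable {X : Type*} [Fintype X] [DecidableEq X]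

/-- A weak order: a reflexive, complete and transitive binary relation. -/
def IsWeakOrder {A : Type*} (r : A → A → Prop) : Prop :=
  Reflexive r ∧ (∀ a b, r a b ∨ r b a) ∧ Transitive r

/-- A social ranking solution maps every weak order on `2^X` to a weak order on `X`. -/
def IsSRS (R : (Finset X → Finset X → Prop) → X → X → Prop) : Prop :=
  ∀ r, IsWeakOrder r → IsWeakOrder (R r)

/-- `IsClassList r L` : `L = [Σ₁, …, Σ_l]` is the list of the equivalence classes of
the weak order `r` on `2^X`, in strictly decreasing order (`≿ : Σ₁ ≻ ⋯ ≻ Σ_l`):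
every class is nonempty, every coalition lies in exactly one class, and
`S ≿ T ↔ i ≤ j` whenever `S ∈ Σᵢ` and `T ∈ Σⱼ` (0-based indices). -/
def IsClassList (r : Finset X → Finset X → Prop) (L : List (Finset (Finset X))) : Prop :=
  (∀ C ∈ L, C.Nonempty) ∧
  (∀ S : Finset X, ∃! i : ℕ, i < L.length ∧ S ∈ L.getD i ∅) ∧
  (∀ i j : ℕ, i < L.length → j < L.length →
    ∀ S ∈ L.getD i ∅, ∀ T ∈ L.getD j ∅, (r S T ↔ i ≤ j))

/-- The asymmetric (strict) part `P` of a relation. -/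
def StrictPart {A : Type*} (p : A → A → Prop) (a b : A) : Prop := p a b ∧ ¬ p b a

/-- The symmetric part `I` (indifference) of a relation. -/
def IndiffPart {A : Type*} (p : A → A → Prop) (a b : A) : Prop := p a b ∧ p b a

/-- The restrictions of `p` and `q` to `{x, y}` coincide. -/
def AgreeOn (p q : X → X → Prop) (x y : X) : Prop :=
  ∀ a ∈ ({x, y} : Set X), ∀ b ∈ ({x, y} : Set X), (p a b ↔ q a b)

/-- `|Δ[x]|` : the number of coalitions in `Δ` containing `x`. -/
def count (Δ : Finset (Finset X)) (x : X) : ℕ := (Δ.filter (fun S => x ∈ S)).card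

/-! ### Independence axioms and further axioms -/

/-- WIVIP: for a dichotomous `≿ : Σ₁ ≻ Σ₂`, any `x ∈ ⋂Σ₁` is socially strictly above
any `y ∉ ⋂Σ₁`. -/
def WIVIP (R : (Finset X → Finset X → Prop) → X → X → Prop) : Prop :=
  ∀ (r : Finset X → Finset X → Prop) (C₁ C₂ : Finset (Finset X)),
    IsClassList r [C₁, C₂] →
    ∀ x y : X, (∀ S ∈ C₁, x ∈ S) → (∃ S ∈ C₁, y ∉ S) →
    StrictPart (R r) x y

/-- IWS (independence from the worst set): if `≿ : Σ₁ ≻ ⋯ ≻ Σ_{l-1} ≻ Σ_l` (`l ≥ 2`)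
and `≿'` is obtained from `≿` by partitioning the worst class `Σ_l` into ordered
classes `Γ₁ ≻' ⋯ ≻' Γ_{l'}`, then `x P_≿ y` implies `x P_≿' y`. -/
def IWS (R : (Finset X → Finset X → Prop) → X → X → Prop) : Prop :=
  ∀ (r r' : Finset X → Finset X → Prop) (L Γ : List (Finset (Finset X)))
    (W : Finset (Finset X)),
    L ≠ [] → IsClassList r (L ++ [W]) → IsClassList r' (L ++ Γ) →
    ∀ x y : X, StrictPart (R r) x y → StrictPart (R r') x y

/-- IBS (independence from the best set): if `≿ : Σ₁ ≻ Σ₂ ≻ ⋯ ≻ Σ_l` (`l ≥ 2`)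
and `≿'` is obtained from `≿` by partitioning the best class `Σ₁` into ordered
classes `Γ₁ ≻' ⋯ ≻' Γ_{l'}`, then `x P_≿ y` implies `x P_≿' y`. -/
def IBS (R : (Finset X → Finset X → Prop) → X → X → Prop) : Prop :=
  ∀ (r r' : Finset X → Finset X → Prop) (B : Finset (Finset X))
    (L Γ : List (Finset (Finset X))),
    L ≠ [] → IsClassList r (B :: L) → IsClassList r' (Γ ++ L) →
    ∀ x y : X, StrictPart (R r) x y → StrictPart (R r') x y

/-- TO (tops-only): two weak orders with the same best equivalence class get the
same social ranking. -/
def TO (R : (Finset X → Finset X → Prop) → X → X → Prop) : Prop :=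
  ∀ (r r' : Finset X → Finset X → Prop) (B : Finset (Finset X))
    (L L' : List (Finset (Finset X))),
    IsClassList r (B :: L) → IsClassList r' (B :: L') → R r = R r'

/-- The class list obtained from `L` by sliding `Δ` out of class `k₁` into class `k₂`
(`Σ_{k₁}` is replaced by `Σ_{k₁} \ Δ` and `Σ_{k₂}` by `Σ_{k₂} ∪ Δ`; if `Δ = Σ_{k₁}`
the emptied class disappears). -/
def slide (L : List (Finset (Finset X))) (k₁ k₂ : ℕ) (Δ : Finset (Finset X)) :
    List (Finset (Finset X)) :=
  ((L.set k₁ ((L.getD k₁ ∅) \ Δ)).set k₂ ((L.getD k₂ ∅) ∪ Δ)).filter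
    (fun C => decide (C ≠ ∅))

/-- SI (slide independence): sliding a proper subfamily `Δ ⊊ Σ_{k₁}` with
`|Δ[x]| = |Δ[y]|` into another class does not change the social ranking on `{x, y}`. -/
def SI (R : (Finset X → Finset X → Prop) → X → X → Prop) : Prop :=
  ∀ (r r' : Finset X → Finset X → Prop) (L : List (Finset (Finset X)))
    (k₁ k₂ : ℕ) (x y : X) (Δ : Finset (Finset X)),
    IsClassList r L → k₁ < L.length → k₂ < L.length →
    Δ ⊂ L.getD k₁ ∅ → count Δ x = count Δ y →
    IsClassList r' (slide L k₁ k₂ Δ) →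
    AgreeOn (R r) (R r') x y

/-- SSI (strong slide independence): as SI, but `Δ ⊆ Σ_{k₁}` may be the whole class
(in which case the class disappears). -/
def SSI (R : (Finset X → Finset X → Prop) → X → X → Prop) : Prop :=
  ∀ (r r' : Finset X → Finset X → Prop) (L : List (Finset (Finset X)))
    (k₁ k₂ : ℕ) (x y : X) (Δ : Finset (Finset X)),
    IsClassList r L → k₁ < L.length → k₂ < L.length →
    Δ ⊆ L.getD k₁ ∅ → count Δ x = count Δ y →
    IsClassList r' (slide L k₁ k₂ Δ) →
    AgreeOn (R r) (R r') x y

/-- Top-SI: the condition of SI restricted to slides out of the best class (`k₁ = 1`,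
i.e. index `0`). -/
def TopSI (R : (Finset X → Finset X → Prop) → X → X → Prop) : Prop :=
  ∀ (r r' : Finset X → Finset X → Prop) (L : List (Finset (Finset X)))
    (k₂ : ℕ) (x y : X) (Δ : Finset (Finset X)),
    IsClassList r L → 0 < L.length → k₂ < L.length →
    Δ ⊂ L.getD 0 ∅ → count Δ x = count Δ y →
    IsClassList r' (slide L 0 k₂ Δ) →
    AgreeOn (R r) (R r') x y

/-- The class list of `≿' : Σ₁ ≻' ⋯ ≻' Σ_{k-1} ≻' Δ ≻' Σ_k \ Δ ≻' ⋯ ≻' Σ_l`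
(empty classes disappear). -/
def inuiList (L : List (Finset (Finset X))) (k : ℕ) (Δ : Finset (Finset X)) :
    List (Finset (Finset X)) :=
  (L.take k ++ [Δ, (L.getD k ∅) \ Δ] ++ L.drop (k + 1)).filter
    (fun C => decide (C ≠ ∅))

/-- INUI (independence of non-unanimous improvements). -/
def INUI (R : (Finset X → Finset X → Prop) → X → X → Prop) : Prop :=
  ∀ (r r' : Finset X → Finset X → Prop) (L : List (Finset (Finset X)))
    (k : ℕ) (Δ : Finset (Finset X)) (x y : X),
    IsClassList r L → k < L.length → Δ ⊆ L.getD k ∅ →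
    (∃ S ∈ Δ, x ∉ S) → (∃ S ∈ Δ, y ∉ S) →
    IsClassList r' (inuiList L k Δ) →
    AgreeOn (R r) (R r') x y

/-- The weak order `≿_π := {(π(S), π(T)) : S ≿ T}` induced by a permutation `π` of `X`. -/
def permRel (π : Equiv.Perm X) (r : Finset X → Finset X → Prop) :
    Finset X → Finset X → Prop :=
  fun A B => r (A.image π.symm) (B.image π.symm)

/-- NT (neutrality). -/
def NT (R : (Finset X → Finset X → Prop) → X → X → Prop) : Prop :=
  ∀ (π : Equiv.Perm X) (r : Finset X → Finset X → Prop), IsWeakOrder r →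
    ∀ x y : X, (R (permRel π r) (π x) (π y) ↔ R r x y)

/-- IIC (independence of irrelevant coalitions). -/
def IIC (R : (Finset X → Finset X → Prop) → X → X → Prop) : Prop :=
  ∀ (r r' : Finset X → Finset X → Prop), IsWeakOrder r → IsWeakOrder r' →
    ∀ x y : X,
      (∀ S : Finset X, x ∉ S → y ∉ S →
        (r (insert x S) (insert y S) ↔ r' (insert x S) (insert y S))) →
      (R r x y ↔ R r' x y)

/-! ### The social ranking solutions -/

/-- `θ_≿(x) = (|Σ₁[x]|, …, |Σ_l[x]|)`. -/
def theta (L : List (Finset (Finset X))) (x : X) : List ℕ := L.map (fun C => count C x)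

/-- The lexicographic order `a ≥^L b` on vectors of naturals. -/
def GeLex (a b : List ℕ) : Prop :=
  a = b ∨ ∃ k < a.length, (∀ j < k, a.getD j 0 = b.getD j 0) ∧ b.getD k 0 < a.getD k 0

/-- The dual lexicographic order `a ≥^DL b` (read from the last coordinate;
fewer appearances in worse classes is better). -/
def GeDualLex (a b : List ℕ) : Prop :=
  a = b ∨ ∃ k < a.length, (∀ j, k < j → a.getD j 0 = b.getD j 0) ∧ a.getD k 0 < b.getD k 0

/-- The lexicographic excellence solution `R^L` : `x R^L_≿ y ↔ θ_≿(x) ≥^L θ_≿(y)`. -/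
def RL (r : Finset X → Finset X → Prop) (x y : X) : Prop :=
  ∀ L, IsClassList r L → GeLex (theta L x) (theta L y)

/-- The dual lexicographic excellence solution `R^DL`. -/
def RDL (r : Finset X → Finset X → Prop) (x y : X) : Prop :=
  ∀ L, IsClassList r L → GeDualLex (theta L x) (theta L y)

/-- Plurality `R^P` : `x R^P_≿ y ↔ |Σ₁[x]| ≥ |Σ₁[y]|`. -/
def RP (r : Finset X → Finset X → Prop) (x y : X) : Prop :=
  ∀ L, IsClassList r L → count (L.getD 0 ∅) y ≤ count (L.getD 0 ∅) x

/-- `e_≿(x)` : the largest `k` such that `x` belongs to every coalition of each of the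
first `k` equivalence classes (`0` if `x ∉ T₁`). -/
def eIIS (L : List (Finset (Finset X))) (x : X) : ℕ :=
  (L.takeWhile (fun C => decide (∀ S ∈ C, x ∈ S))).length

/-- The intersection initial segment rule `R^IIS` : `x R^IIS_≿ y ↔ e_≿(x) ≥ e_≿(y)`. -/
def RIIS (r : Finset X → Finset X → Prop) (x y : X) : Prop :=
  ∀ L, IsClassList r L → eIIS L y ≤ eIIS L x

/-- The constant-`X` rule: everybody is ranked indifferent. -/
def RconstX : (Finset X → Finset X → Prop) → X → X → Prop := fun _ _ _ => True

/-- The split-plurality score `s^split_≿(z) = ∑_{S ∈ Σ₁ : z ∈ S} 1/|S|`. -/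
def splitScore (C : Finset (Finset X)) (z : X) : ℚ :=
  ∑ S ∈ C.filter (fun S => z ∈ S), (1 : ℚ) / (S.card : ℚ)

/-- Split-plurality `R^splitP`. -/
def RsplitP (r : Finset X → Finset X → Prop) (x y : X) : Prop :=
  ∀ L, IsClassList r L → splitScore (L.getD 0 ∅) y ≤ splitScore (L.getD 0 ∅) x

/-- Plurality with tie-breaking by a linear order `t = ▷` :
`x R^{P,▷}_≿ y ↔ (x P^P_≿ y ∨ (x I^P_≿ y ∧ x ▷ y))`. -/
def RPtie (t : X → X → Prop) (r : Finset X → Finset X → Prop) (x y : X) : Prop :=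
  ∀ L, IsClassList r L →
    (count (L.getD 0 ∅) y < count (L.getD 0 ∅) x ∨
      (count (L.getD 0 ∅) x = count (L.getD 0 ∅) y ∧ t x y))

/-!
Under tops-only every weak order may be replaced by the dichotomous one `B ≻ Bᶜ` with the same best
class `B`, and slide independence then allows passing from `B` to a nonempty `G ⊆ B ≠ 𝔛` whenever
`x` and `y` occur equally often in `B \ G`.

* If `x` and `y` occur equally often in `B`, the empty coalition is used as a parking place: `B` can
  be moved to `insert ∅ B` and then to `{∅}`, where `x` and `y` are interchangeable, so neutrality
  makes them indifferent. The only obstruction is `insert ∅ B = 𝔛`, and then `B` itself is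
  symmetric.
* If `x` occurs strictly more often than `y`, all coalitions of `B` can be slid out except for some
  that contain `x` but not `y`, and WIVIP applies to what is left.
-/

section Relations

variable {A : Type*} {r : A → A → Prop}

theorem isWeakOrder_of_rel_iff_le {α : Type*} [LinearOrder α] (f : A → α)
    (hf : ∀ a b, r a b ↔ f a ≤ f b) : IsWeakOrder r := by
  refine ⟨fun a => (hf a a).2 le_rfl, fun a b => ?_, fun a b c hab hbc => ?_⟩
  · rw [hf, hf]
    exact le_total _ _
  · exact (hf a c).2 (((hf a b).1 hab).trans ((hf b c).1 hbc))

theorem IsWeakOrder.exists_surjective_fin_rel_iff_le [Finite A] (hr : IsWeakOrder r) :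
    ∃ (n : ℕ) (rank : A → Fin n), Function.Surjective rank ∧
      ∀ a b, r a b ↔ rank a ≤ rank b := by
  classical
  obtain ⟨hrefl, htotal, htrans⟩ := hr
  let _ : Preorder A := { le := r, le_refl := hrefl, le_trans := fun _ _ _ => @htrans _ _ _ }
  have : @Std.Total A (· ≤ ·) := ⟨htotal⟩
  have : Finite (Antisymmetrization A (· ≤ ·)) := Quotient.finite _
  have := Fintype.ofFinite (Antisymmetrization A (· ≤ ·))
  let e := Fintype.orderIsoFinOfCardEq (Antisymmetrization A (· ≤ ·)) rfl
  refine ⟨_, fun a => e.symm (toAntisymmetrization (· ≤ ·) a),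
    e.symm.surjective.comp Quotient.mk_surjective, fun a b => ?_⟩
  rw [e.symm.le_iff_le]
  rfl

open Classical in
/-- The best equivalence class `Σ₁` of a weak order, described without reference to a list of
classes. -/
noncomputable def topClass [Fintype A] (r : A → A → Prop) : Finset A :=
  Finset.univ.filter fun a => ∀ b, r a b

theorem mem_topClass [Fintype A] {a : A} : a ∈ topClass r ↔ ∀ b, r a b := by
  simp [topClass]

/-- The relation with best class `B` and worst class `Bᶜ`; it is total indifference when one of the
two is empty. -/
def dichotomy (B : Finset A) (a b : A) : Prop := b ∈ B → a ∈ B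

theorem isWeakOrder_dichotomy (B : Finset A) : IsWeakOrder (dichotomy B) := by
  refine ⟨fun _ => id, fun a b => ?_, fun a b c hab hbc => hab ∘ hbc⟩
  unfold dichotomy
  tauto

theorem topClass_dichotomy [Fintype A] {B : Finset A} (hB : B.Nonempty) :
    topClass (dichotomy B) = B := by
  obtain ⟨b, hb⟩ := hB
  ext a
  rw [mem_topClass]
  exact ⟨fun h => h b hb, fun ha _ _ => ha⟩

end Relations

variable {ι : Type*} {R R' : (Finset ι → Finset ι → Prop) → ι → ι → Prop}
  {r r' : Finset ι → Finset ι → Prop} {L : List (Finset (Finset ι))}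
  {B G Δ : Finset (Finset ι)} {x y : ι}

section AgreeOn

variable {p q s : ι → ι → Prop}

theorem AgreeOn.symm (h : AgreeOn p q x y) : AgreeOn q p x y :=
  fun a ha b hb => (h a ha b hb).symm

theorem AgreeOn.trans (hpq : AgreeOn p q x y) (hqs : AgreeOn q s x y) : AgreeOn p s x y :=
  fun a ha b hb => (hpq a ha b hb).trans (hqs a ha b hb)

theorem AgreeOn.rel_iff (h : AgreeOn p q x y) : p x y ↔ q x y :=
  h x (by simp) y (by simp)

theorem AgreeOn.strictPart_iff (h : AgreeOn p q x y) : StrictPart p x y ↔ StrictPart q x y :=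
  and_congr h.rel_iff (not_congr (h y (by simp) x (by simp)))

end AgreeOn

section Count

variable [DecidableEq ι]

theorem count_union (h : Disjoint B G) (x : ι) : count (B ∪ G) x = count B x + count G x := by
  unfold count
  rw [Finset.filter_union, Finset.card_union_of_disjoint (Finset.disjoint_filter_filter h)]

theorem count_sdiff_add_count (h : G ⊆ B) (x : ι) : count (B \ G) x + count G x = count B x := by
  rw [← count_union Finset.sdiff_disjoint, Finset.sdiff_union_of_subset h]

theorem count_eq_card (h : ∀ S ∈ B, x ∈ S) : count B x = B.card :=
  congrArg Finset.card (Finset.filter_true_of_mem h)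

theorem count_eq_zero (h : ∀ S ∈ B, x ∉ S) : count B x = 0 :=
  Finset.card_eq_zero.2 (Finset.filter_false_of_mem h)

theorem count_lt_count_of_forall_mem (hx : ∀ S ∈ B, x ∈ S) (hy : ∃ S ∈ B, y ∉ S) :
    count B y < count B x := by
  rw [count_eq_card hx]
  exact Finset.card_lt_card (Finset.filter_ssubset.2 hy)

theorem count_image_perm (π : Equiv.Perm ι) (B : Finset (Finset ι)) (x : ι) :
    count (B.image (Finset.image π)) (π x) = count B x := by
  unfold count
  rw [Finset.filter_image,
    Finset.card_image_of_injective _ (Finset.image_injective π.injective)]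
  simp only [π.injective.mem_finset_image]

theorem image_perm_surjective (π : Equiv.Perm ι) :
    Function.Surjective (Finset.image π : Finset ι → Finset ι) :=
  fun S => ⟨S.image π.symm, by simp [Finset.image_image]⟩

theorem count_univ_eq [Fintype ι] (x y : ι) : count Finset.univ x = count Finset.univ y := by
  rw [← count_image_perm (Equiv.swap x y),
    Finset.image_univ_of_surjective (image_perm_surjective _), Equiv.swap_apply_left]

theorem count_le_card_filter_add_count (B : Finset (Finset ι)) (x y : ι) :
    count B x ≤ (B.filter fun S => x ∈ S ∧ y ∉ S).card + count B y := by
  refine (Finset.card_le_card fun S hS => ?_).trans (Finset.card_union_le _ _)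
  simp only [Finset.mem_union, Finset.mem_filter] at hS ⊢
  tauto

theorem exists_subset_count_sdiff_eq (h : count B y < count B x) :
    ∃ G ⊆ B, G.Nonempty ∧ (∀ S ∈ G, x ∈ S ∧ y ∉ S) ∧
      count (B \ G) x = count (B \ G) y := by
  have hle := count_le_card_filter_add_count B x y
  obtain ⟨G, hG, hcard⟩ := Finset.exists_subset_card_eq
    (s := B.filter fun S => x ∈ S ∧ y ∉ S) (n := count B x - count B y) (by omega)
  have hGB : G ⊆ B := hG.trans (Finset.filter_subset _ _)
  have hmem : ∀ S ∈ G, x ∈ S ∧ y ∉ S := fun S hS => (Finset.mem_filter.1 (hG hS)).2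
  refine ⟨G, hGB, Finset.card_pos.1 (by omega), hmem, ?_⟩
  have hx := count_sdiff_add_count hGB x
  have hy := count_sdiff_add_count hGB y
  rw [count_eq_card fun S hS => (hmem S hS).1] at hx
  rw [count_eq_zero fun S hS => (hmem S hS).2] at hy
  omega

theorem count_insert_empty (B : Finset (Finset ι)) (x : ι) : count (insert ∅ B) x = count B x := by
  simp [count, Finset.filter_insert]

end Count

section ClassList

theorem IsClassList.length_pos (hL : IsClassList r L) : 0 < L.length := by
  obtain ⟨i, ⟨hi, -⟩, -⟩ := hL.2.1 ∅
  exact i.zero_le.trans_lt hi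

theorem IsClassList.getD_nonempty (hL : IsClassList r L) {k : ℕ} (hk : k < L.length) :
    (L.getD k ∅).Nonempty := by
  rw [List.getD_eq_getElem _ _ hk]
  exact hL.1 _ (List.getElem_mem hk)

theorem IsClassList.disjoint_getD (hL : IsClassList r L) {j k : ℕ} (hj : j < L.length)
    (hk : k < L.length) (hjk : j ≠ k) : Disjoint (L.getD j ∅) (L.getD k ∅) :=
  Finset.disjoint_left.2 fun S hSj hSk => hjk ((hL.2.1 S).unique ⟨hj, hSj⟩ ⟨hk, hSk⟩)

theorem IsClassList.isWeakOrder (hL : IsClassList r L) : IsWeakOrder r := by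
  choose index hindex _ using hL.2.1
  exact isWeakOrder_of_rel_iff_le index fun S T =>
    hL.2.2 _ _ (hindex S).1 (hindex T).1 S (hindex S).2 T (hindex T).2

theorem IsClassList.mem_getD_zero (hL : IsClassList r L) {S : Finset ι} :
    S ∈ L.getD 0 ∅ ↔ ∀ T, r S T := by
  constructor
  · intro hS T
    obtain ⟨j, ⟨hj, hTj⟩, -⟩ := hL.2.1 T
    exact (hL.2.2 0 j hL.length_pos hj S hS T hTj).2 j.zero_le
  · intro hS
    obtain ⟨i, ⟨hi, hSi⟩, -⟩ := hL.2.1 S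
    obtain ⟨T, hT⟩ := hL.getD_nonempty hL.length_pos
    have hi0 : i ≤ 0 := (hL.2.2 i 0 hi hL.length_pos S hSi T hT).1 (hS T)
    rwa [Nat.le_zero.1 hi0] at hSi

theorem IsClassList.getD_zero [Fintype ι] (hL : IsClassList r L) : L.getD 0 ∅ = topClass r :=
  Finset.ext fun _ => hL.mem_getD_zero.trans mem_topClass.symm

theorem isClassList_ofFn_filter [Fintype ι] {n : ℕ} {rank : Finset ι → Fin n}
    (hsurj : Function.Surjective rank) (hr : ∀ S T, r S T ↔ rank S ≤ rank T) :
    IsClassList r (List.ofFn fun i => Finset.univ.filter fun S => rank S = i) := by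
  have mem_getD : ∀ i (S : Finset ι),
      i < n ∧ S ∈ (List.ofFn fun i => Finset.univ.filter fun S => rank S = i).getD i ∅ ↔
        (rank S : ℕ) = i := by
    intro i S
    by_cases hi : i < n
    · simp [List.getD_eq_getElem?_getD, hi, Fin.ext_iff]
    · have := (rank S).isLt
      simp only [hi, false_and, false_iff]
      omega
  refine ⟨fun C hC => ?_, fun S => ?_, fun i j hi hj S hS T hT => ?_⟩
  · obtain ⟨i, rfl⟩ := List.mem_ofFn.1 hC
    obtain ⟨S, hS⟩ := hsurj i
    exact ⟨S, by simp [hS]⟩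
  · simp only [List.length_ofFn, mem_getD]
    exact existsUnique_eq'
  · rw [List.length_ofFn] at hi hj
    rw [hr, Fin.le_def, (mem_getD i S).1 ⟨hi, hS⟩, (mem_getD j T).1 ⟨hj, hT⟩]

theorem IsWeakOrder.exists_isClassList [Finite ι] (hr : IsWeakOrder r) :
    ∃ L, IsClassList r L := by
  cases nonempty_fintype ι
  obtain ⟨_, _, hsurj, hrank⟩ := hr.exists_surjective_fin_rel_iff_le
  exact ⟨_, isClassList_ofFn_filter hsurj hrank⟩

theorem IsWeakOrder.exists_isClassList_topClass_cons [Fintype ι] (hr : IsWeakOrder r) :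
    ∃ L, IsClassList r (topClass r :: L) := by
  obtain ⟨_ | ⟨C, L⟩, hL⟩ := hr.exists_isClassList
  · exact absurd hL.length_pos (lt_irrefl 0)
  · have hC : C = topClass r := hL.getD_zero
    exact ⟨L, hC ▸ hL⟩

theorem IsWeakOrder.topClass_nonempty [Fintype ι] (hr : IsWeakOrder r) :
    (topClass r).Nonempty :=
  have ⟨_, hL⟩ := hr.exists_isClassList
  hL.getD_zero ▸ hL.getD_nonempty hL.length_pos

theorem isClassList_dichotomy [Fintype ι] [DecidableEq ι] (hB : B.Nonempty)
    (hB' : B ≠ Finset.univ) : IsClassList (dichotomy B) [B, Bᶜ] := by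
  have hBc : Bᶜ.Nonempty := by rwa [Finset.nonempty_iff_ne_empty, Ne, Finset.compl_eq_empty_iff]
  have hrank := isClassList_ofFn_filter (r := dichotomy B)
    (rank := fun S => if S ∈ B then (0 : Fin 2) else 1) ?_ ?_
  · convert hrank
    simp [List.ofFn_succ, Finset.compl_eq_univ_sdiff, Finset.filter_notMem_eq_sdiff]
  · exact Fin.forall_fin_two.2 ⟨hB.imp fun S hS => by simp [hS],
      hBc.imp fun S hS => by simpa using hS⟩
  · intro S T
    by_cases hS : S ∈ B <;> by_cases hT : T ∈ B <;> simp [dichotomy, hS, hT]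

theorem slide_eq_set_set [DecidableEq ι] (hL : ∀ C ∈ L, C.Nonempty) {k₁ k₂ : ℕ}
    (hk₂ : k₂ < L.length) (hΔ : Δ ⊂ L.getD k₁ ∅) :
    slide L k₁ k₂ Δ = (L.set k₁ (L.getD k₁ ∅ \ Δ)).set k₂ (L.getD k₂ ∅ ∪ Δ) := by
  refine List.filter_eq_self.2 fun C hC => ?_
  rw [decide_eq_true_eq, ← Finset.nonempty_iff_ne_empty]
  rcases List.mem_or_eq_of_mem_set hC with hC | rfl
  · rcases List.mem_or_eq_of_mem_set hC with hC | rfl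
    · exact hL C hC
    · exact Finset.sdiff_nonempty.2 hΔ.not_subset
  · rw [List.getD_eq_getElem _ _ hk₂]
    exact (hL _ (List.getElem_mem hk₂)).mono Finset.subset_union_left

theorem IsClassList.count_getD_slide_add_count [DecidableEq ι] (hL : IsClassList r L)
    {k₁ k₂ : ℕ} (hk₁ : k₁ < L.length) (hk₂ : k₂ < L.length) (hΔ : Δ ⊂ L.getD k₁ ∅)
    (hcount : count Δ x = count Δ y) {j : ℕ} (hj : j < L.length) :
    count ((slide L k₁ k₂ Δ).getD j ∅) x + count (L.getD j ∅) y =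
      count ((slide L k₁ k₂ Δ).getD j ∅) y + count (L.getD j ∅) x := by
  have hset : (slide L k₁ k₂ Δ).getD j ∅ =
      if k₂ = j then L.getD k₂ ∅ ∪ Δ else if k₁ = j then L.getD k₁ ∅ \ Δ else L.getD j ∅ := by
    rw [slide_eq_set_set hL.1 hk₂ hΔ, List.getD_eq_getElem _ _ (by simpa using hj),
      List.getElem_set, List.getElem_set, List.getD_eq_getElem L _ hj]
  rw [hset]
  split_ifs with h₂ h₁
  · subst h₂
    by_cases h : k₁ = k₂
    · rw [Finset.union_eq_left.2 (h ▸ hΔ.subset), add_comm]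
    · have hdisj := (hL.disjoint_getD hk₁ hk₂ h).mono_left hΔ.subset
      rw [count_union hdisj.symm, count_union hdisj.symm]
      omega
  · subst h₁
    have hx := count_sdiff_add_count hΔ.subset x
    have hy := count_sdiff_add_count hΔ.subset y
    omega
  · exact add_comm _ _

end ClassList

section Plurality

variable [DecidableEq ι]

theorem IsClassList.RP_iff (hL : IsClassList r L) :
    RP r x y ↔ count (L.getD 0 ∅) y ≤ count (L.getD 0 ∅) x :=
  have head_eq {L'} (hL' : IsClassList r L') : L'.getD 0 ∅ = L.getD 0 ∅ :=
    Finset.ext fun _ => hL'.mem_getD_zero.trans hL.mem_getD_zero.symm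
  ⟨fun h => h L hL, fun h L' hL' => by rwa [head_eq hL']⟩

theorem IsWeakOrder.RP_iff [Fintype ι] (hr : IsWeakOrder r) :
    RP r x y ↔ count (topClass r) y ≤ count (topClass r) x := by
  obtain ⟨L, hL⟩ := hr.exists_isClassList
  rw [hL.RP_iff, hL.getD_zero]

theorem IsWeakOrder.permRel (hr : IsWeakOrder r) (π : Equiv.Perm ι) :
    IsWeakOrder (permRel π r) :=
  ⟨fun _ => hr.1 _, fun _ _ => hr.2.1 _ _, fun _ _ _ hST hTU => hr.2.2 hST hTU⟩

theorem topClass_permRel [Fintype ι] (π : Equiv.Perm ι)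
    (r : Finset ι → Finset ι → Prop) :
    topClass (permRel π r) = (topClass r).image (Finset.image π) := by
  have symm_image : ∀ S : Finset ι, (S.image π).image π.symm = S := fun S => by
    simp [Finset.image_image]
  ext S
  obtain ⟨S, rfl⟩ := image_perm_surjective π S
  rw [(Finset.image_injective π.injective).mem_finset_image, mem_topClass, mem_topClass,
    (image_perm_surjective π).forall]
  simp only [permRel, symm_image]

theorem nt_RP [Finite ι] : NT (RP (X := ι)) := by
  cases nonempty_fintype ι
  intro π r hr x y
  rw [hr.RP_iff, (hr.permRel π).RP_iff, topClass_permRel, count_image_perm, count_image_perm]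

theorem wivip_RP : WIVIP (RP (X := ι)) := by
  intro r C₁ C₂ hL x y hx hy
  have hlt : count C₁ y < count C₁ x := count_lt_count_of_forall_mem hx hy
  rw [StrictPart, hL.RP_iff, hL.RP_iff]
  exact ⟨hlt.le, hlt.not_ge⟩

theorem to_RP : TO (RP (X := ι)) := by
  intro r r' B L L' hL hL'
  funext x y
  rw [eq_iff_iff, hL.RP_iff, hL'.RP_iff, List.getD_cons_zero, List.getD_cons_zero]

theorem si_RP : SI (RP (X := ι)) := by
  intro r r' L k₁ k₂ x y Δ hL hk₁ hk₂ hΔ hcount hL' a ha b hb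
  have hdiff := hL.count_getD_slide_add_count hk₁ hk₂ hΔ hcount hL.length_pos
  rw [hL.RP_iff, hL'.RP_iff]
  rcases ha with rfl | rfl <;> rcases hb with rfl | rfl <;> omega

end Plurality

section Congr

theorem NT.congr [DecidableEq ι] (hNT : NT R') (h : ∀ r, IsWeakOrder r → R r = R' r) : NT R := by
  intro π r hr x y
  rw [h r hr, h _ (hr.permRel π)]
  exact hNT π r hr x y

theorem WIVIP.congr (hW : WIVIP R') (h : ∀ r, IsWeakOrder r → R r = R' r) : WIVIP R := by
  intro r C₁ C₂ hL
  rw [h r hL.isWeakOrder]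
  exact hW r C₁ C₂ hL

theorem TO.congr (hTO : TO R') (h : ∀ r, IsWeakOrder r → R r = R' r) : TO R := by
  intro r r' B L L' hL hL'
  rw [h r hL.isWeakOrder, h r' hL'.isWeakOrder]
  exact hTO r r' B L L' hL hL'

theorem SI.congr [DecidableEq ι] (hSI : SI R') (h : ∀ r, IsWeakOrder r → R r = R' r) : SI R := by
  intro r r' L k₁ k₂ x y Δ hL hk₁ hk₂ hΔ hcount hL'
  rw [h r hL.isWeakOrder, h r' hL'.isWeakOrder]
  exact hSI r r' L k₁ k₂ x y Δ hL hk₁ hk₂ hΔ hcount hL'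

end Congr

section Characterization

theorem TO.apply_eq_of_topClass_eq [Fintype ι] (hTO : TO R) (hr : IsWeakOrder r)
    (hr' : IsWeakOrder r') (h : topClass r = topClass r') : R r = R r' := by
  obtain ⟨L, hL⟩ := hr.exists_isClassList_topClass_cons
  obtain ⟨L', hL'⟩ := hr'.exists_isClassList_topClass_cons
  exact hTO r r' _ L L' hL (h ▸ hL')

variable [DecidableEq ι]

theorem NT.rel_dichotomy_of_swap_invariant (hNT : NT R) (hR : IsSRS R)
    (hB : ∀ S : Finset ι, S.image (Equiv.swap x y) ∈ B ↔ S ∈ B) : R (dichotomy B) x y := by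
  have hperm : permRel (Equiv.swap x y) (dichotomy B) = dichotomy B := by
    funext S T
    simp only [permRel, dichotomy, Equiv.symm_swap, hB]
  have hswap : R (dichotomy B) y x ↔ R (dichotomy B) x y := by
    simpa only [hperm, Equiv.swap_apply_left, Equiv.swap_apply_right] using
      hNT (Equiv.swap x y) (dichotomy B) (isWeakOrder_dichotomy B) x y
  exact ((hR _ (isWeakOrder_dichotomy B)).2.1 x y).elim id hswap.1

theorem SI.agreeOn_dichotomy_of_subset [Fintype ι] (hSI : SI R) (hG : G.Nonempty)
    (hGB : G ⊆ B) (hB : B ≠ Finset.univ)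
    (hcount : count (B \ G) x = count (B \ G) y) :
    AgreeOn (R (dichotomy B)) (R (dichotomy G)) x y := by
  have hL := isClassList_dichotomy (hG.mono hGB) hB
  have hΔ : B \ G ⊂ B := Finset.sdiff_ssubset hGB hG
  have hslide : slide [B, Bᶜ] 0 1 (B \ G) = [G, Gᶜ] := by
    rw [slide_eq_set_set hL.1 Nat.one_lt_two hΔ]
    have hbest : B \ (B \ G) = G := Finset.sdiff_sdiff_eq_self hGB
    have hworst : Bᶜ ∪ B \ G = Gᶜ := by
      ext S
      have := @hGB S
      simp only [Finset.mem_union, Finset.mem_compl, Finset.mem_sdiff]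
      tauto
    simp [hbest, hworst]
  have hG' : G ≠ Finset.univ := fun h => hB (Finset.univ_subset_iff.1 (h ▸ hGB))
  exact hSI _ _ _ 0 1 x y _ hL Nat.two_pos Nat.one_lt_two hΔ hcount
    (hslide ▸ isClassList_dichotomy hG hG')

theorem SI.agreeOn_dichotomy_singleton_empty [Fintype ι] (hSI : SI R) (hB : B.Nonempty)
    (hB' : insert ∅ B ≠ Finset.univ) (hcount : count B x = count B y) :
    AgreeOn (R (dichotomy B)) (R (dichotomy {∅})) x y := by
  have hsub : {∅} ⊆ insert ∅ B := by simp
  have count_added : ∀ z, count (insert ∅ B \ B) z = 0 := fun z => by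
    have := count_sdiff_add_count (Finset.subset_insert ∅ B) z
    rwa [count_insert_empty, Nat.add_eq_right] at this
  have count_removed : ∀ z, count (insert ∅ B \ {∅}) z = count B z := fun z => by
    have := count_sdiff_add_count hsub z
    rwa [count_eq_zero (B := {∅}) (by simp), add_zero, count_insert_empty] at this
  have add_empty : AgreeOn (R (dichotomy (insert ∅ B))) (R (dichotomy B)) x y :=
    hSI.agreeOn_dichotomy_of_subset hB (Finset.subset_insert ∅ B) hB'
      (by rw [count_added, count_added])
  have remove_rest : AgreeOn (R (dichotomy (insert ∅ B))) (R (dichotomy {∅})) x y :=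
    hSI.agreeOn_dichotomy_of_subset (Finset.singleton_nonempty ∅) hsub hB'
      (by rwa [count_removed, count_removed])
  exact add_empty.symm.trans remove_rest

theorem rel_dichotomy_of_count_eq [Finite ι] (hR : IsSRS R) (hNT : NT R) (hSI : SI R)
    (hB : B.Nonempty) (hcount : count B x = count B y) : R (dichotomy B) x y := by
  cases nonempty_fintype ι
  by_cases hins : insert ∅ B = Finset.univ
  · refine hNT.rel_dichotomy_of_swap_invariant hR fun S => ?_
    have mem_B : ∀ T : Finset ι, T.Nonempty → T ∈ B := fun T hT =>
      Finset.mem_of_mem_insert_of_ne (hins ▸ Finset.mem_univ T) hT.ne_empty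
    rcases S.eq_empty_or_nonempty with rfl | hS
    · rw [Finset.image_empty]
    · exact iff_of_true (mem_B _ (hS.image _)) (mem_B S hS)
  · rw [(hSI.agreeOn_dichotomy_singleton_empty hB hins hcount).rel_iff]
    exact hNT.rel_dichotomy_of_swap_invariant hR (by simp)

theorem strictPart_dichotomy_of_count_lt [Finite ι] (hW : WIVIP R) (hSI : SI R)
    (hcount : count B y < count B x) : StrictPart (R (dichotomy B)) x y := by
  cases nonempty_fintype ι
  have hB : B ≠ Finset.univ := by
    rintro rfl
    exact hcount.ne (count_univ_eq y x)
  obtain ⟨G, hGB, hG, hmem, hsdiff⟩ := exists_subset_count_sdiff_eq hcount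
  have hG' : G ≠ Finset.univ := fun h => hB (Finset.univ_subset_iff.1 (h ▸ hGB))
  rw [(hSI.agreeOn_dichotomy_of_subset hG hGB hB hsdiff).strictPart_iff]
  exact hW _ G Gᶜ (isClassList_dichotomy hG hG') x y (fun S hS => (hmem S hS).1)
    (hG.imp fun S hS => ⟨hS, (hmem S hS).2⟩)

theorem rel_dichotomy_iff_count_le [Finite ι] (hR : IsSRS R) (hNT : NT R) (hW : WIVIP R)
    (hSI : SI R) (hB : B.Nonempty) : R (dichotomy B) x y ↔ count B y ≤ count B x := by
  rcases lt_trichotomy (count B y) (count B x) with hlt | heq | hgt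
  · exact iff_of_true (strictPart_dichotomy_of_count_lt hW hSI hlt).1 hlt.le
  · exact iff_of_true (rel_dichotomy_of_count_eq hR hNT hSI hB heq.symm) heq.le
  · exact iff_of_false (strictPart_dichotomy_of_count_lt hW hSI hgt).2 hgt.not_ge

theorem eq_RP_of_nt_wivip_to_si [Finite ι] (hR : IsSRS R) (hNT : NT R) (hW : WIVIP R)
    (hTO : TO R) (hSI : SI R) (hr : IsWeakOrder r) : R r = RP r := by
  cases nonempty_fintype ι
  funext x y
  have htop := hr.topClass_nonempty
  rw [hTO.apply_eq_of_topClass_eq hr (isWeakOrder_dichotomy _) (topClass_dichotomy htop).symm,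
    eq_iff_iff, hr.RP_iff, rel_dichotomy_iff_count_le hR hNT hW hSI htop]

theorem plurality_characterization_general [Finite ι]
    (R : (Finset ι → Finset ι → Prop) → ι → ι → Prop) (hR : IsSRS R) :
    (NT R ∧ WIVIP R ∧ TO R ∧ SI R) ↔ (∀ r, IsWeakOrder r → R r = RP r) :=
  ⟨fun ⟨hNT, hW, hTO, hSI⟩ _ hr => eq_RP_of_nt_wivip_to_si hR hNT hW hTO hSI hr,
    fun h => ⟨nt_RP.congr h, wivip_RP.congr h, to_RP.congr h, si_RP.congr h⟩⟩

end Characterization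

/-- Theorem (characterization of plurality, `|X| ≥ 3`):
an SRS satisfies NT, WIVIP, TO and SI iff it is `R^P`. -/
theorem plurality_characterization (hX : 3 ≤ Fintype.card X)
    (R : (Finset X → Finset X → Prop) → X → X → Prop) (hR : IsSRS R) :
    (NT R ∧ WIVIP R ∧ TO R ∧ SI R) ↔ (∀ r, IsWeakOrder r → R r = RP r) :=
  plurality_characterization_general R hR

end SocialRanking
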